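/- arXiv:1206.3102 — 5 statements merged into one kernel-verified Lean document; each statement's English description precedes it below -/
import Mathlib

section
/- Let ρ be an n×n positive definite hermitian matrix, α ∈ ℝ, and let C_1, …, C_D be linearly independent hermitian matrices in M_n(ℂ). Set B_j = (Ω_ρ^α)^{-1}(C_j) (each B_j is hermitian) and let T be the real span of {B_1, …, B_D}. Then for any hermitian L ∈ M_n(ℂ), the function A ↦ tr[(A − L) Ω_ρ^α(A − L)] attains a unique minimum on T, and A* ∈ T is this minimizer if and only if tr[C_j A*] = tr[C_j L] for all j = 1, …, D. In particular, the minimizer is determined by the matching of the linear functionals A ↦ tr[C_j A] with those of L, a condition not involving α. -/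
open scoped Matrix ComplexOrder
/-- Real power `ρ^t` of a hermitian matrix, defined through the spectral
decomposition (continuous functional calculus applied to `x ↦ x ^ t`). -/
noncomputable def matrixRpow {n : Type*} [Fintype n] [DecidableEq n]
    {ρ : Matrix n n ℂ} (hρ : ρ.IsHermitian) (t : ℝ) : Matrix n n ℂ :=
  hρ.cfc fun x => x ^ t

/-- The superoperator `Ω_ρ^α(σ) = (1/2)(ρ^{-α} σ ρ^{α-1} + ρ^{α-1} σ ρ^{-α})`. -/
noncomputable def Omega {n : Type*} [Fintype n] [DecidableEq n]
    {ρ : Matrix n n ℂ} (hρ : ρ.IsHermitian) (α : ℝ) (σ : Matrix n n ℂ) : Matrix n n ℂ :=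
  (1 / 2 : ℂ) • (matrixRpow hρ (-α) * σ * matrixRpow hρ (α - 1)
    + matrixRpow hρ (α - 1) * σ * matrixRpow hρ (-α))

/-!
The form `β X Y = Re tr[Xᴴ Ω_ρ^α(Y)]` is a real inner product on all matrices. On hermitian matrices
the objective is `β (A - L) (A - L)`, so minimising it over `T` is orthogonal projection of `L` onto
`T`. The minimizer is thus the unique `A ∈ T` with `β (B_j) (A - L) = 0` for all `j`; since `Ω_ρ^α`
is self-adjoint for the trace pairing, `β (B_j) X = tr[C_j X]` for hermitian `X`, and `α` drops out.
-/

section BilinForm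

section CommSemiring

variable {R E : Type*} [CommSemiring R] [AddCommMonoid E] [Module R E]
  {β : LinearMap.BilinForm R E}

theorem bilinForm_add_self (hsymm : β.IsSymm) (x y : E) :
    β (x + y) (x + y) = β x x + 2 * β y x + β y y := by
  simp only [map_add, LinearMap.add_apply, hsymm.eq x y]
  ring

theorem mem_orthogonal_span_range_iff {ι : Type*} {b : ι → E} {x : E} :
    x ∈ β.orthogonal (Submodule.span R (Set.range b)) ↔ ∀ i, β (b i) x = 0 := by
  refine ⟨fun hx i => hx _ (Submodule.subset_span ⟨i, rfl⟩), fun hx => ?_⟩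
  have span_le : Submodule.span R (Set.range b) ≤ LinearMap.ker (β.flip x) :=
    Submodule.span_le.2 (Set.range_subset_iff.2 hx)
  exact fun v hv => span_le hv

theorem disjoint_orthogonal_of_anisotropic {T : Submodule R E}
    (hβ : β.toQuadraticMap.Anisotropic) : Disjoint T (β.orthogonal T) :=
  Submodule.disjoint_def.2 fun v hv hv' => hβ v (hv' v hv)

end CommSemiring

variable {K E : Type*} [Field K] [AddCommGroup E] [Module K E]
  {β : LinearMap.BilinForm K E} {T : Submodule K E}

theorem existsUnique_sub_mem_orthogonal [FiniteDimensional K E] (hrefl : β.IsRefl)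
    (hβ : β.toQuadraticMap.Anisotropic) (x : E) : ∃! y, y ∈ T ∧ y - x ∈ β.orthogonal T := by
  have disj : Disjoint T (β.orthogonal T) := disjoint_orthogonal_of_anisotropic hβ
  have compl : IsCompl T (β.orthogonal T) :=
    (LinearMap.BilinForm.isCompl_orthogonal_iff_disjoint hrefl).2 disj
  obtain ⟨y, hy, z, hz, rfl⟩ := Submodule.mem_sup.1 (compl.sup_eq_top ▸ Submodule.mem_top (x := x))
  refine ⟨y, ⟨hy, by simpa using hz⟩, fun y' ⟨hy', hyz'⟩ => sub_eq_zero.1 ?_⟩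
  refine Submodule.disjoint_def.1 disj _ (T.sub_mem hy' hy) ?_
  convert add_mem hyz' hz using 1
  abel

variable [LinearOrder K] [IsStrictOrderedRing K]

theorem forall_mem_le_iff_sub_mem_orthogonal (hβ : β.IsPosSemidef) {x y : E} (hy : y ∈ T) :
    (∀ z ∈ T, β (y - x) (y - x) ≤ β (z - x) (z - x)) ↔ y - x ∈ β.orthogonal T := by
  constructor
  · intro hmin v hv
    have quadratic_nonneg (t : K) : 0 ≤ β v v * (t * t) + 2 * β v (y - x) * t + 0 := by
      have hle := hmin (y + t • v) (T.add_mem hy (T.smul_mem t hv))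
      rw [add_sub_right_comm, bilinForm_add_self hβ.isSymm] at hle
      simp only [map_smul, LinearMap.smul_apply, smul_eq_mul] at hle
      linarith
    have hdiscrim := discrim_le_zero quadratic_nonneg
    rw [discrim, mul_zero, sub_zero] at hdiscrim
    simpa using sq_nonpos_iff _ |>.1 hdiscrim
  · intro hortho z hz
    have cross_eq_zero : β (z - y) (y - x) = 0 := hortho _ (T.sub_mem hz hy)
    calc β (y - x) (y - x)
        ≤ β (y - x) (y - x) + β (z - y) (z - y) := le_add_of_nonneg_right (hβ.isNonneg.nonneg _)
      _ = β ((y - x) + (z - y)) ((y - x) + (z - y)) := by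
          rw [bilinForm_add_self hβ.isSymm, cross_eq_zero, mul_zero, add_zero]
      _ = β (z - x) (z - x) := by rw [sub_add_sub_cancel']

end BilinForm

section Matrix

theorem isHermitian_of_mem_span {𝕜 ι n : Type*} [RCLike 𝕜] {B : ι → Matrix n n 𝕜}
    (hB : ∀ i, (B i).IsHermitian) {A : Matrix n n 𝕜} (hA : A ∈ Submodule.span ℝ (Set.range B)) :
    A.IsHermitian := by
  have span_le : Submodule.span ℝ (Set.range B) ≤ selfAdjoint.submodule ℝ (Matrix n n 𝕜) :=
    Submodule.span_le.2 (Set.range_subset_iff.2 hB)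
  exact span_le hA

variable {𝕜 m n : Type*} [RCLike 𝕜] [Fintype m] [Fintype n]

theorem ofReal_re_trace_mul {X Y : Matrix n n ℂ} (hX : X.IsHermitian) (hY : Y.IsHermitian) :
    ((X * Y).trace.re : ℂ) = (X * Y).trace := by
  rw [← Complex.conj_eq_iff_re, starRingEnd_apply, ← Matrix.trace_conjTranspose,
    Matrix.conjTranspose_mul, hX.eq, hY.eq, Matrix.trace_mul_comm]

open scoped MatrixOrder in
theorem trace_conjTranspose_mul_mul_mul_pos {P : Matrix m m 𝕜} {Q : Matrix n n 𝕜} (hP : P.PosDef)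
    (hQ : Q.PosDef) {X : Matrix m n 𝕜} (hX : X ≠ 0) : 0 < (Xᴴ * (P * X * Q)).trace := by
  classical
  obtain ⟨R, rfl⟩ := CStarAlgebra.nonneg_iff_eq_star_mul_self.1 hP.posSemidef.nonneg
  obtain ⟨S, rfl⟩ := CStarAlgebra.nonneg_iff_eq_star_mul_self.1 hQ.posSemidef.nonneg
  simp only [Matrix.star_eq_conjTranspose] at hP hQ ⊢
  have trace_eq : (Xᴴ * (Rᴴ * R * X * (Sᴴ * S))).trace = ((R * X * Sᴴ)ᴴ * (R * X * Sᴴ)).trace := by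
    simp only [Matrix.conjTranspose_mul, Matrix.conjTranspose_conjTranspose, Matrix.mul_assoc]
    rw [Matrix.trace_mul_comm S]
    simp only [Matrix.mul_assoc]
  have ne_zero : R * X * Sᴴ ≠ 0 := by
    intro h
    have sandwich_eq_zero : Rᴴ * R * X * (Sᴴ * S) = 0 := by
      rw [← Matrix.mul_assoc, Matrix.mul_assoc Rᴴ, Matrix.mul_assoc Rᴴ, h, Matrix.mul_zero,
        Matrix.zero_mul]
    have := hP.isUnit.invertible
    have := hQ.isUnit.invertible
    apply hX
    rwa [← Matrix.zero_mul (Sᴴ * S), Matrix.mul_left_inj_of_invertible,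
      ← Matrix.mul_zero (Rᴴ * R), Matrix.mul_right_inj_of_invertible] at sandwich_eq_zero
  rw [trace_eq]
  exact (Matrix.posSemidef_conjTranspose_mul_self _).trace_nonneg.lt_of_ne'
    (Matrix.trace_conjTranspose_mul_self_eq_zero_iff.not.2 ne_zero)

variable [DecidableEq n] {A : Matrix n n 𝕜}

theorem isHermitian_cfc (hA : A.IsHermitian) (f : ℝ → ℝ) : (hA.cfc f).IsHermitian :=
  hA.cfc_eq f ▸ cfc_predicate f A

theorem posDef_cfc (hA : A.IsHermitian) {f : ℝ → ℝ} (hf : ∀ i, 0 < f (hA.eigenvalues i)) :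
    (hA.cfc f).PosDef := by
  rw [Matrix.IsHermitian.cfc, Unitary.conjStarAlgAut_apply,
    Matrix.IsUnit.posDef_star_right_conjugate_iff Unitary.isUnit_coe]
  exact Matrix.PosDef.diagonal fun i => by simpa using hf i

end Matrix

section Omega

variable {n : Type*} [Fintype n] [DecidableEq n] {ρ : Matrix n n ℂ}

theorem matrixRpow_isHermitian (hρ : ρ.IsHermitian) (t : ℝ) : (matrixRpow hρ t).IsHermitian :=
  isHermitian_cfc hρ _

theorem matrixRpow_posDef (hρ : ρ.PosDef) (t : ℝ) : (matrixRpow hρ.1 t).PosDef :=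
  posDef_cfc hρ.1 fun i => Real.rpow_pos_of_pos (hρ.eigenvalues_pos i) t

/-- The superoperator `Ω_ρ^α`, bundled as a complex-linear endomorphism of the matrices. -/
noncomputable def omegaLinearMap (hρ : ρ.IsHermitian) (α : ℝ) :
    Matrix n n ℂ →ₗ[ℂ] Matrix n n ℂ where
  toFun := Omega hρ α
  map_add' X Y := by
    simp only [Omega, mul_add, add_mul, ← smul_add]
    rw [add_add_add_comm]
  map_smul' c X := by
    simp only [Omega, Matrix.mul_smul, Matrix.smul_mul, ← smul_add, RingHom.id_apply]
    rw [smul_comm]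

theorem omega_conjTranspose (hρ : ρ.IsHermitian) (α : ℝ) (X : Matrix n n ℂ) :
    Omega hρ α Xᴴ = (Omega hρ α X)ᴴ := by
  simp only [Omega, Matrix.conjTranspose_smul, Matrix.conjTranspose_add, Matrix.conjTranspose_mul,
    (matrixRpow_isHermitian hρ _).eq, mul_assoc]
  simp [add_comm]

theorem trace_omega_mul (hρ : ρ.IsHermitian) (α : ℝ) (X Y : Matrix n n ℂ) :
    (Omega hρ α X * Y).trace = (X * Omega hρ α Y).trace := by
  have cyclic (P Q : Matrix n n ℂ) : (P * X * Q * Y).trace = (X * (Q * Y * P)).trace := by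
    rw [mul_assoc, mul_assoc, Matrix.trace_mul_comm]
    simp only [mul_assoc]
  simp only [Omega, Matrix.mul_smul, Matrix.smul_mul, Matrix.trace_smul, mul_add, add_mul,
    Matrix.trace_add, cyclic]
  rw [add_comm]

theorem trace_conjTranspose_mul_omega_pos (hρ : ρ.PosDef) (α : ℝ) {X : Matrix n n ℂ}
    (hX : X ≠ 0) : 0 < (Xᴴ * Omega hρ.1 α X).trace := by
  have sandwich_pos (s t : ℝ) :
      0 < (Xᴴ * (matrixRpow hρ.1 s * X * matrixRpow hρ.1 t)).trace :=
    trace_conjTranspose_mul_mul_mul_pos (matrixRpow_posDef hρ s) (matrixRpow_posDef hρ t) hX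
  rw [Omega, Matrix.mul_smul, Matrix.trace_smul, mul_add, Matrix.trace_add, smul_eq_mul]
  exact mul_pos (by norm_num) (add_pos (sandwich_pos _ _) (sandwich_pos _ _))

theorem omega_injective (hρ : ρ.PosDef) (α : ℝ) : Function.Injective (Omega hρ.1 α) := by
  refine (injective_iff_map_eq_zero (omegaLinearMap hρ.1 α)).2 fun X hX => ?_
  replace hX : Omega hρ.1 α X = 0 := hX
  by_contra hne
  simpa [hX] using trace_conjTranspose_mul_omega_pos hρ α hne

theorem isHermitian_omega_iff (hρ : ρ.PosDef) (α : ℝ) {X : Matrix n n ℂ} :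
    (Omega hρ.1 α X).IsHermitian ↔ X.IsHermitian := by
  rw [Matrix.IsHermitian, ← omega_conjTranspose, (omega_injective hρ α).eq_iff, Matrix.IsHermitian]

/-- The real bilinear form `Re tr[Xᴴ Ω_ρ^α(Y)]` on all complex matrices. The adjoint on `X` makes it
positive definite on the whole space; on hermitian matrices it is `tr[X Ω_ρ^α(Y)]`. -/
noncomputable def omegaForm (hρ : ρ.IsHermitian) (α : ℝ) :
    LinearMap.BilinForm ℝ (Matrix n n ℂ) :=
  LinearMap.mk₂ ℝ (fun X Y => (Xᴴ * omegaLinearMap hρ α Y).trace.re)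
    (fun X X' Y => by simp [add_mul])
    (fun c X Y => by simp)
    (fun X Y Y' => by simp [mul_add])
    (fun c X Y => by simp)

theorem omegaForm_apply (hρ : ρ.IsHermitian) (α : ℝ) (X Y : Matrix n n ℂ) :
    omegaForm hρ α X Y = (Xᴴ * Omega hρ α Y).trace.re :=
  rfl

theorem omegaForm_isSymm (hρ : ρ.IsHermitian) (α : ℝ) : (omegaForm hρ α).IsSymm where
  eq X Y := by
    have trace_star : star (Xᴴ * Omega hρ α Y).trace = (Yᴴ * Omega hρ α X).trace := by
      rw [← Matrix.trace_conjTranspose, Matrix.conjTranspose_mul,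
        Matrix.conjTranspose_conjTranspose, ← omega_conjTranspose, trace_omega_mul]
    rw [omegaForm_apply, omegaForm_apply, ← trace_star]
    exact (Complex.conj_re _).symm

theorem omegaForm_posDef (hρ : ρ.PosDef) (α : ℝ) : (omegaForm hρ.1 α).toQuadraticMap.PosDef :=
  fun _ hX => (Complex.lt_def.1 (trace_conjTranspose_mul_omega_pos hρ α hX)).1

theorem omegaForm_isPosSemidef (hρ : ρ.PosDef) (α : ℝ) : (omegaForm hρ.1 α).IsPosSemidef where
  __ := omegaForm_isSymm hρ.1 α
  isNonneg := ⟨(omegaForm_posDef hρ α).nonneg⟩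

theorem ofReal_omegaForm (hρ : ρ.IsHermitian) (α : ℝ) {X Y : Matrix n n ℂ} (hX : X.IsHermitian)
    (hY : Y.IsHermitian) : (omegaForm hρ α X Y : ℂ) = (Omega hρ α X * Y).trace := by
  have hΩX : (Omega hρ α X).IsHermitian := by
    rw [Matrix.IsHermitian, ← omega_conjTranspose, hX.eq]
  rw [omegaForm_apply, hX.eq, ← trace_omega_mul, ofReal_re_trace_mul hΩX hY]

theorem forall_mem_trace_le_iff_sub_mem_orthogonal (hρ : ρ.PosDef) (α : ℝ)
    {T : Submodule ℝ (Matrix n n ℂ)} (hT : ∀ A ∈ T, A.IsHermitian) {L S : Matrix n n ℂ}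
    (hL : L.IsHermitian) (hS : S ∈ T) :
    (∀ A ∈ T, ((S - L) * Omega hρ.1 α (S - L)).trace ≤ ((A - L) * Omega hρ.1 α (A - L)).trace) ↔
      S - L ∈ (omegaForm hρ.1 α).orthogonal T := by
  have objective_eq {A} (hA : A ∈ T) :
      ((A - L) * Omega hρ.1 α (A - L)).trace = (omegaForm hρ.1 α (A - L) (A - L) : ℂ) := by
    have hAL := (hT A hA).sub hL
    rw [ofReal_omegaForm hρ.1 α hAL hAL, trace_omega_mul]
  rw [← forall_mem_le_iff_sub_mem_orthogonal (omegaForm_isPosSemidef hρ α) hS]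
  refine forall₂_congr fun A hA => ?_
  rw [objective_eq hS, objective_eq hA, Complex.real_le_real]

theorem sub_mem_omegaForm_orthogonal_span_iff (hρ : ρ.IsHermitian) (α : ℝ) {ι : Type*}
    {B : ι → Matrix n n ℂ} (hB : ∀ i, (B i).IsHermitian) {X Y : Matrix n n ℂ}
    (hX : X.IsHermitian) (hY : Y.IsHermitian) :
    X - Y ∈ (omegaForm hρ α).orthogonal (Submodule.span ℝ (Set.range B)) ↔
      ∀ i, (Omega hρ α (B i) * X).trace = (Omega hρ α (B i) * Y).trace := by
  rw [mem_orthogonal_span_range_iff]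
  refine forall_congr' fun i => ?_
  rw [map_sub, sub_eq_zero, ← Complex.ofReal_inj, ofReal_omegaForm hρ α (hB i) hX,
    ofReal_omegaForm hρ α (hB i) hY]

end Omega

theorem tdvp_minimizer_characterization_general {n : Type*} [Fintype n] [DecidableEq n]
    {ρ : Matrix n n ℂ} (hρ : ρ.PosDef) (α : ℝ) {ι : Type*}
    (C : ι → Matrix n n ℂ) (hC : ∀ j, (C j).IsHermitian)
    (B : ι → Matrix n n ℂ) (hB : ∀ j, Omega hρ.1 α (B j) = C j)
    (L : Matrix n n ℂ) (hL : L.IsHermitian) :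
    (∀ j, (B j).IsHermitian) ∧
    (∃! Astar : Matrix n n ℂ, Astar ∈ Submodule.span ℝ (Set.range B) ∧
      ∀ A ∈ Submodule.span ℝ (Set.range B),
        Matrix.trace ((Astar - L) * Omega hρ.1 α (Astar - L)) ≤
          Matrix.trace ((A - L) * Omega hρ.1 α (A - L))) ∧
    (∀ Astar ∈ Submodule.span ℝ (Set.range B),
      ((∀ A ∈ Submodule.span ℝ (Set.range B),
          Matrix.trace ((Astar - L) * Omega hρ.1 α (Astar - L)) ≤
            Matrix.trace ((A - L) * Omega hρ.1 α (A - L))) ↔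
        ∀ j, Matrix.trace (C j * Astar) = Matrix.trace (C j * L))) := by
  have hBherm j : (B j).IsHermitian := (isHermitian_omega_iff hρ α).1 (hB j ▸ hC j)
  have hTherm A (hA : A ∈ Submodule.span ℝ (Set.range B)) : A.IsHermitian :=
    isHermitian_of_mem_span hBherm hA
  have minimizer_iff {S} (hS : S ∈ Submodule.span ℝ (Set.range B)) :=
    forall_mem_trace_le_iff_sub_mem_orthogonal hρ α hTherm hL hS
  refine ⟨hBherm, ?_, fun S hS => ?_⟩
  · simp only [and_congr_right_iff.2 minimizer_iff]
    exact existsUnique_sub_mem_orthogonal (omegaForm_isSymm hρ.1 α).isRefl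
      (omegaForm_posDef hρ α).anisotropic L
  · rw [minimizer_iff hS, sub_mem_omegaForm_orthogonal_span_iff hρ.1 α hBherm (hTherm S hS) hL]
    simp only [hB]

/-- TDVP minimisation over the real span `T` of `B_j = (Ω_ρ^α)⁻¹(C_j)`: the `B_j` are
hermitian, the function `A ↦ tr[(A − L) Ω_ρ^α(A − L)]` attains a unique minimum on `T`,
and `A* ∈ T` is this minimizer iff `tr[C_j A*] = tr[C_j L]` for all `j` —
a condition not involving `α`. -/
theorem tdvp_minimizer_characterization {n : Type*} [Fintype n] [DecidableEq n]
    {ρ : Matrix n n ℂ} (hρ : ρ.PosDef) (α : ℝ) {D : ℕ}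
    (C : Fin D → Matrix n n ℂ) (hC : ∀ j, (C j).IsHermitian)
    (hCind : LinearIndependent ℝ C)
    (B : Fin D → Matrix n n ℂ) (hB : ∀ j, Omega hρ.1 α (B j) = C j)
    (L : Matrix n n ℂ) (hL : L.IsHermitian) :
    (∀ j, (B j).IsHermitian) ∧
    (∃! Astar : Matrix n n ℂ, Astar ∈ Submodule.span ℝ (Set.range B) ∧
      ∀ A ∈ Submodule.span ℝ (Set.range B),
        Matrix.trace ((Astar - L) * Omega hρ.1 α (Astar - L)) ≤
          Matrix.trace ((A - L) * Omega hρ.1 α (A - L))) ∧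
    (∀ Astar ∈ Submodule.span ℝ (Set.range B),
      ((∀ A ∈ Submodule.span ℝ (Set.range B),
          Matrix.trace ((Astar - L) * Omega hρ.1 α (Astar - L)) ≤
            Matrix.trace ((A - L) * Omega hρ.1 α (A - L))) ↔
        ∀ j, Matrix.trace (C j * Astar) = Matrix.trace (C j * L))) := by
  exact tdvp_minimizer_characterization_general hρ α C hC B hB L hL
end

section
/- For every n×n positive definite hermitian matrix ρ and every α ∈ ℝ, the linear superoperator Ω_ρ^α : M_n(ℂ) → M_n(ℂ) is bijective; in particular (Ω_ρ^α)^{-1} exists as a linear map on M_n(ℂ). -/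
open scoped Matrix ComplexOrder
/-!
In an orthonormal eigenbasis of `ρ`, with eigenvalues `λᵢ > 0`, the superoperator acts entrywise:
it multiplies the `(i, j)` entry of `σ` by
`(λᵢ ^ (-α) * λⱼ ^ (α - 1) + λᵢ ^ (α - 1) * λⱼ ^ (-α)) / 2`.
These factors are positive, so dividing by them inverts it.
-/

theorem hadamard_left_bijective {m n G₀ : Type*} [GroupWithZero G₀] {C : Matrix m n G₀}
    (hC : ∀ i j, C i j ≠ 0) : Function.Bijective (C ⊙ ·) :=
  .piMap fun i => .piMap fun j => mulLeft_bijective₀ (C i j) (hC i j)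

theorem diagonal_mul_mul_diagonal {m n R : Type*} [Fintype m] [DecidableEq m] [Fintype n]
    [DecidableEq n] [NonUnitalCommSemiring R] (d : m → R) (e : n → R) (A : Matrix m n R) :
    Matrix.diagonal d * A * Matrix.diagonal e = Matrix.vecMulVec d e ⊙ A := by
  ext i j
  simp only [Matrix.mul_diagonal, Matrix.diagonal_mul, Matrix.hadamard_apply,
    Matrix.vecMulVec_apply, mul_right_comm]

section FunctionalCalculus

variable {n 𝕜 : Type*} [RCLike 𝕜] [Fintype n] [DecidableEq n] {A : Matrix n n 𝕜}

theorem cfc_mul_conj_mul_cfc (hA : A.IsHermitian) (f g : ℝ → ℝ) (τ : Matrix n n 𝕜) :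
    hA.cfc f * Unitary.conjStarAlgAut 𝕜 _ hA.eigenvectorUnitary τ * hA.cfc g =
      Unitary.conjStarAlgAut 𝕜 _ hA.eigenvectorUnitary
        (Matrix.vecMulVec (RCLike.ofReal ∘ f ∘ hA.eigenvalues)
          (RCLike.ofReal ∘ g ∘ hA.eigenvalues) ⊙ τ) := by
  rw [Matrix.IsHermitian.cfc, Matrix.IsHermitian.cfc, ← map_mul, ← map_mul,
    diagonal_mul_mul_diagonal]

theorem cfc_mul_mul_cfc_add_bijective (hA : A.IsHermitian) {f g f' g' : ℝ → ℝ}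
    (h : ∀ i j, f (hA.eigenvalues i) * g (hA.eigenvalues j) +
      f' (hA.eigenvalues i) * g' (hA.eigenvalues j) ≠ 0) :
    Function.Bijective fun σ : Matrix n n 𝕜 =>
      hA.cfc f * σ * hA.cfc g + hA.cfc f' * σ * hA.cfc g' := by
  let φ := Unitary.conjStarAlgAut 𝕜 (Matrix n n 𝕜) hA.eigenvectorUnitary
  let multiplier (f g : ℝ → ℝ) : Matrix n n 𝕜 :=
    Matrix.vecMulVec (RCLike.ofReal ∘ f ∘ hA.eigenvalues) (RCLike.ofReal ∘ g ∘ hA.eigenvalues)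
  have multiplier_ne_zero (i j : n) : (multiplier f g + multiplier f' g') i j ≠ 0 := by
    simpa [multiplier, Matrix.vecMulVec_apply] using mod_cast h i j
  rw [← Function.Bijective.of_comp_iff _ (EquivLike.bijective φ)]
  convert (EquivLike.bijective φ).comp (hadamard_left_bijective multiplier_ne_zero) using 1
  funext τ
  simp only [Function.comp_apply, φ, multiplier, cfc_mul_conj_mul_cfc, Matrix.add_hadamard, map_add]

end FunctionalCalculus

/-- The superoperator `Ω_ρ^α : M_n(ℂ) → M_n(ℂ)` is bijective. -/
theorem omega_bijective {n : Type*} [Fintype n] [DecidableEq n]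
    {ρ : Matrix n n ℂ} (hρ : ρ.PosDef) (α : ℝ) :
    Function.Bijective (Omega hρ.1 α) := by
  have multiplier_ne_zero (i j : n) :
      hρ.1.eigenvalues i ^ (-α) * hρ.1.eigenvalues j ^ (α - 1) +
        hρ.1.eigenvalues i ^ (α - 1) * hρ.1.eigenvalues j ^ (-α) ≠ 0 := by
    have hi := hρ.eigenvalues_pos i
    have hj := hρ.eigenvalues_pos j
    positivity
  have half_smul_bijective : Function.Bijective ((1 / 2 : ℂ) • · : Matrix n n ℂ → Matrix n n ℂ) :=
    MulAction.bijective₀ (by norm_num)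
  exact half_smul_bijective.comp (cfc_mul_mul_cfc_add_bijective hρ.1 multiplier_ne_zero)
end

section
/- Let ρ be an n×n positive definite hermitian matrix, α ∈ ℝ, and let T_1, …, T_D be linearly independent hermitian matrices in M_n(ℂ). Then the D×D matrix G with entries G_{jk} = tr[T_j Ω_ρ^α(T_k)] has real entries, is symmetric, and is positive definite (hence invertible). -/
open scoped Matrix ComplexOrder
/-!
For positive definite `A` and `B`, `⟨S, R⟩ = Re tr(Sᴴ A R B)` is a real inner product: if
`A = Cᴴ C` and `B = Fᴴ F`, then `⟨S, S⟩` is the squared Frobenius norm of `C S Fᴴ`. For hermitian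
`S` and `R`, exchanging `A` and `B` conjugates `tr(S A R B)`, so symmetrizing in `A` and `B`
amounts to taking the real part: `tr(S Ω(R)) = Re tr(S ρ^{-α} R ρ^{α-1})`. Hence `G` is the Gram
matrix of the linearly independent family `T` in a real inner product space.
-/

section SandwichInner

variable {𝕜 m n : Type*} [RCLike 𝕜] [Fintype m] [Fintype n]
variable {A : Matrix m m 𝕜} {B : Matrix n n 𝕜}

lemma exists_isUnit_eq_conjTranspose_mul_self [DecidableEq m] (hA : A.PosDef) :
    ∃ C : Matrix m m 𝕜, IsUnit C ∧ A = Cᴴ * C := by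
  open scoped MatrixOrder in
  exact CStarAlgebra.isStrictlyPositive_iff_eq_star_mul_self.mp hA.isStrictlyPositive

lemma star_trace_conjTranspose_mul_mul_mul (hA : A.IsHermitian) (hB : B.IsHermitian)
    (S R : Matrix m n 𝕜) :
    star (Sᴴ * A * R * B).trace = (Rᴴ * A * S * B).trace := by
  rw [← Matrix.trace_conjTranspose, Matrix.trace_mul_comm (Rᴴ * A * S)]
  simp only [Matrix.conjTranspose_mul, Matrix.conjTranspose_conjTranspose, hA.eq, hB.eq,
    Matrix.mul_assoc]

lemma trace_conjTranspose_mul_mul_mul_pos_s9 (hA : A.PosDef) (hB : B.PosDef) {S : Matrix m n 𝕜}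
    (hS : S ≠ 0) : 0 < (Sᴴ * A * S * B).trace := by
  classical
  obtain ⟨C, hC, rfl⟩ := exists_isUnit_eq_conjTranspose_mul_self hA
  obtain ⟨F, hF, rfl⟩ := exists_isUnit_eq_conjTranspose_mul_self hB
  have trace_eq : (Sᴴ * (Cᴴ * C) * S * (Fᴴ * F)).trace =
      ((C * S * Fᴴ)ᴴ * (C * S * Fᴴ)).trace := by
    rw [← Matrix.mul_assoc _ Fᴴ F, Matrix.trace_mul_comm _ F]
    simp only [Matrix.conjTranspose_mul, Matrix.conjTranspose_conjTranspose, Matrix.mul_assoc]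
  have sandwich_ne_zero : C * S * Fᴴ ≠ 0 := by
    let _ : Invertible C := hC.invertible
    let _ : Invertible Fᴴ := hF.star.invertible
    refine fun h => hS (Matrix.mul_right_injective_of_invertible C
      (Matrix.mul_left_injective_of_invertible Fᴴ ?_))
    simpa using h
  rw [trace_eq]
  exact (Matrix.posSemidef_conjTranspose_mul_self _).trace_nonneg.lt_of_ne'
    (mt Matrix.trace_conjTranspose_mul_self_eq_zero_iff.mp sandwich_ne_zero)

/-- The real inner product `⟨S, R⟩ = Re tr(Sᴴ A R B)` on rectangular matrices attached to positive
definite weights `A` and `B`. The real part makes it applicable to families that are linearly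
independent only over `ℝ`. -/
noncomputable abbrev sandwichInnerCore (hA : A.PosDef) (hB : B.PosDef) :
    InnerProductSpace.Core ℝ (Matrix m n 𝕜) where
  inner S R := RCLike.re (Sᴴ * A * R * B).trace
  conj_inner_symm S R := by
    rw [← star_trace_conjTranspose_mul_mul_mul hA.isHermitian hB.isHermitian S R]
    simp
  re_inner_nonneg S := by
    rcases eq_or_ne S 0 with rfl | hS
    · simp
    · exact (RCLike.pos_iff.mp (trace_conjTranspose_mul_mul_mul_pos_s9 hA hB hS)).1.le
  add_left S R Q := by simp [Matrix.add_mul]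
  smul_left S R r := by simp [RCLike.smul_re]
  definite S hS := by
    contrapose! hS
    exact (RCLike.pos_iff.mp (trace_conjTranspose_mul_mul_mul_pos_s9 hA hB hS)).1.ne'

lemma posDef_re_trace_conjTranspose_mul_mul_mul {ι : Type*} (hA : A.PosDef) (hB : B.PosDef)
    {T : ι → Matrix m n 𝕜} (hT : LinearIndependent ℝ T) :
    (Matrix.of fun j k => RCLike.re ((T j)ᴴ * A * T k * B).trace).PosDef := by
  let core := sandwichInnerCore hA hB
  let _ : NormedAddCommGroup (Matrix m n 𝕜) := core.toNormedAddCommGroup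
  let _ : InnerProductSpace ℝ (Matrix m n 𝕜) := .ofCore core.toCore
  have : Finite ι := hT.finite
  exact Matrix.posDef_gram_of_linearIndependent hT

end SandwichInner

section SymmSandwich

variable {𝕜 n : Type*} [RCLike 𝕜] [Fintype n]

/-- The symmetrized two-sided multiplication `σ ↦ (1/2)(A σ B + B σ A)`; the superoperator `Ω_ρ^α`
is the case `A = ρ^{-α}`, `B = ρ^{α-1}`. -/
noncomputable def symmSandwich (A B σ : Matrix n n 𝕜) : Matrix n n 𝕜 :=
  (1 / 2 : 𝕜) • (A * σ * B + B * σ * A)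

lemma trace_mul_symmSandwich {A B S R : Matrix n n 𝕜} (hA : A.IsHermitian) (hB : B.IsHermitian)
    (hS : S.IsHermitian) (hR : R.IsHermitian) :
    (S * symmSandwich A B R).trace = (RCLike.re (S * A * R * B).trace : 𝕜) := by
  have trace_swap : (S * B * R * A).trace = star (S * A * R * B).trace := by
    have star_trace : star (S * A * R * B).trace = (R * A * S * B).trace := by
      simpa only [hS.eq, hR.eq] using star_trace_conjTranspose_mul_mul_mul hA hB S R
    rw [star_trace, Matrix.mul_assoc (S * B), Matrix.trace_mul_comm, ← Matrix.mul_assoc]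
  calc (S * symmSandwich A B R).trace
      = (1 / 2 : 𝕜) * ((S * A * R * B).trace + (S * B * R * A).trace) := by
        simp only [symmSandwich, Matrix.mul_smul, Matrix.mul_add, Matrix.trace_smul,
          Matrix.trace_add, smul_eq_mul, Matrix.mul_assoc]
    _ = (RCLike.re (S * A * R * B).trace : 𝕜) := by
        rw [trace_swap, RCLike.star_def, RCLike.add_conj, one_div, inv_mul_cancel_left₀ two_ne_zero]

theorem gram_matrix_posDef_general {A B : Matrix n n 𝕜} (hA : A.PosDef) (hB : B.PosDef)
    {ι : Type*} {T : ι → Matrix n n 𝕜} (hT : ∀ j, (T j).IsHermitian)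
    (hTind : LinearIndependent ℝ T) :
    (∀ j k, (T j * symmSandwich A B (T k)).trace =
      (RCLike.re (T j * symmSandwich A B (T k)).trace : 𝕜)) ∧
    (Matrix.of fun j k => RCLike.re (T j * symmSandwich A B (T k)).trace).IsSymm ∧
    (Matrix.of fun j k => RCLike.re (T j * symmSandwich A B (T k)).trace).PosDef := by
  have gram_eq (j k : ι) : (T j * symmSandwich A B (T k)).trace =
      (RCLike.re ((T j)ᴴ * A * T k * B).trace : 𝕜) := by
    rw [(hT j).eq, trace_mul_symmSandwich hA.isHermitian hB.isHermitian (hT j) (hT k)]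
  have gram_posDef := posDef_re_trace_conjTranspose_mul_mul_mul hA hB hTind
  simp only [gram_eq, RCLike.ofReal_re, implies_true, true_and]
  exact ⟨Matrix.isHermitian_iff_isSymm.mp gram_posDef.isHermitian, gram_posDef⟩

end SymmSandwich

lemma posDef_cfc_iff {𝕜 n : Type*} [RCLike 𝕜] [Fintype n] [DecidableEq n] {A : Matrix n n 𝕜}
    (hA : A.IsHermitian) (f : ℝ → ℝ) : (hA.cfc f).PosDef ↔ ∀ i, 0 < f (hA.eigenvalues i) := by
  rw [Matrix.IsHermitian.cfc, Unitary.conjStarAlgAut_apply,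
    Matrix.IsUnit.posDef_star_right_conjugate_iff Unitary.isUnit_coe, Matrix.posDef_diagonal_iff]
  simp only [Function.comp_apply, RCLike.ofReal_pos]

lemma posDef_matrixRpow {n : Type*} [Fintype n] [DecidableEq n] {ρ : Matrix n n ℂ}
    (hρ : ρ.PosDef) (t : ℝ) : (matrixRpow hρ.1 t).PosDef :=
  (posDef_cfc_iff hρ.1 _).mpr fun i => Real.rpow_pos_of_pos (hρ.eigenvalues_pos i) t

/-- The Gram matrix `G_{jk} = tr[T_j Ω_ρ^α(T_k)]` built from linearly independent
hermitian matrices `T_j` has real entries, is symmetric and is positive definite. -/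
theorem gram_matrix_posDef {n : Type*} [Fintype n] [DecidableEq n]
    {ρ : Matrix n n ℂ} (hρ : ρ.PosDef) (α : ℝ) {D : ℕ}
    (T : Fin D → Matrix n n ℂ) (hT : ∀ j, (T j).IsHermitian)
    (hTind : LinearIndependent ℝ T) :
    (∀ j k, Matrix.trace (T j * Omega hρ.1 α (T k)) =
      ((Matrix.trace (T j * Omega hρ.1 α (T k))).re : ℂ)) ∧
    (Matrix.of fun j k => (Matrix.trace (T j * Omega hρ.1 α (T k))).re).IsSymm ∧
    (Matrix.of fun j k => (Matrix.trace (T j * Omega hρ.1 α (T k))).re).PosDef :=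
  gram_matrix_posDef_general (posDef_matrixRpow hρ (-α)) (posDef_matrixRpow hρ (α - 1)) hT hTind
end

section
/- Let c_1, …, c_{2N} be hermitian complex matrices satisfying the Clifford relations c_k c_l + c_l c_k = 2δ_{kl}·I, set P_j = c_{2j-1} c_{2j}, and let ρ = ∏_{j=1}^N (1/2)(I + i λ_j P_j) for real numbers λ_1, …, λ_N. Then for all 1 ≤ k < l ≤ N, the commutator of ρ with c_{2k} c_{2l} is [ρ, c_{2k} c_{2l}] = (i/2)(λ_k c_{2k-1} c_{2l} + λ_l c_{2k} c_{2l-1}) ρ̂_{kl}, where ρ̂_{kl} = ∏_{j≠k,l} (1/2)(I + i λ_j P_j). -/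
open scoped Matrix

/-- The standard-form Gaussian state `ρ = ∏_{j=1}^N (1/2)(I + i λ_j c_{2j-1} c_{2j})`,
written as an ordered product (the factors pairwise commute), where `o j = c_{2j-1}` and
`e j = c_{2j}`. -/
noncomputable def gaussianStd {m : Type*} [Fintype m] [DecidableEq m] {N : ℕ}
    (o e : Fin N → Matrix m m ℂ) (lam : Fin N → ℝ) : Matrix m m ℂ :=
  ((List.finRange N).map fun j =>
    (2⁻¹ : ℂ) • (1 + (Complex.I * (lam j : ℂ)) • (o j * e j))).prod

/-- The state `ρ̂` with a subset `s` of the modes omitted: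
`∏_{j ∉ s} (1/2)(I + i λ_j c_{2j-1} c_{2j})`. -/
noncomputable def gaussianStdHat {m : Type*} [Fintype m] [DecidableEq m] {N : ℕ}
    (o e : Fin N → Matrix m m ℂ) (lam : Fin N → ℝ) (s : Finset (Fin N)) : Matrix m m ℂ :=
  (((List.finRange N).filter fun j => j ∉ s).map fun j =>
    (2⁻¹ : ℂ) • (1 + (Complex.I * (lam j : ℂ)) • (o j * e j))).prod

/-!
Write `P j = o j * e j` and `X = e k * e l`. Since `X` contains exactly one factor of each of the
pairs `P k` and `P l`, it anticommutes with both, and it commutes with every other `P j`. Hence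
`ρ̂` factors out of `[ρ, X]`. Of the product of the two remaining factors, the `P k * P l` term
commutes with `X`, while the terms linear in `P k` and `P l` are doubled; finally
`P k * X = o k * e l` and `P l * X = e k * o l`.
-/

section Anticommute

/-! Anticommutation of `a` and `b` is expressed as `SemiconjBy a b (-b)`. -/

variable {A : Type*} [Ring A] {a b c d : A}

theorem semiconjBy_neg_of_mul_add_mul_eq_zero (h : a * b + b * a = 0) : SemiconjBy a b (-b) := by
  rw [SemiconjBy, neg_mul]
  exact eq_neg_of_add_eq_zero_left h

theorem semiconjBy_neg_symm (h : SemiconjBy a b (-b)) : SemiconjBy b a (-a) := by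
  rw [SemiconjBy, neg_mul, h.eq, neg_mul, neg_neg]

theorem commute_mul_of_semiconjBy_neg (hb : SemiconjBy a b (-b)) (hc : SemiconjBy a c (-c)) :
    Commute a (b * c) := by
  simpa only [neg_mul_neg, Commute] using hb.mul_right hc

theorem commute_mul_mul_of_semiconjBy_neg (hac : SemiconjBy a c (-c)) (had : SemiconjBy a d (-d))
    (hbc : SemiconjBy b c (-c)) (hbd : SemiconjBy b d (-d)) : Commute (a * b) (c * d) :=
  (commute_mul_of_semiconjBy_neg hac had).mul_left (commute_mul_of_semiconjBy_neg hbc hbd)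

theorem semiconjBy_mul_neg_of_shared_left (hab : SemiconjBy a b (-b)) (hac : SemiconjBy a c (-c))
    (hbc : SemiconjBy b c (-c)) : SemiconjBy (a * b) (b * c) (-(b * c)) := by
  have hb : SemiconjBy b (b * c) (-(b * c)) := by
    simpa only [mul_neg] using SemiconjBy.mul_right (Commute.refl b) hbc
  exact SemiconjBy.mul_left (commute_mul_of_semiconjBy_neg hab hac).neg_right hb

theorem semiconjBy_mul_neg_of_shared_right (hab : SemiconjBy a b (-b)) (hac : SemiconjBy a c (-c))
    (hbc : SemiconjBy b c (-c)) : SemiconjBy (a * b) (c * b) (-(c * b)) := by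
  have hb : SemiconjBy b (c * b) (-(c * b)) := by
    simpa only [neg_mul] using SemiconjBy.mul_right hbc (Commute.refl b)
  exact SemiconjBy.mul_left (commute_mul_of_semiconjBy_neg hac hab).neg_right hb

theorem mul_mul_mul_cancel_of_semiconjBy_neg (hac : SemiconjBy a c (-c))
    (hbc : SemiconjBy b c (-c)) (hb : b * b = 1) : a * b * (c * b) = c * a :=
  calc a * b * (c * b) = a * (b * c) * b := by simp only [mul_assoc]
    _ = -(a * c) * (b * b) := by rw [hbc.eq]; noncomm_ring
    _ = c * a := by rw [hb, hac.eq, mul_one, neg_mul, neg_neg]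

end Anticommute

theorem mul_self_eq_one_of_add_self_eq_two (K : Type*) {A : Type*} [Field K] [NeZero (2 : K)]
    [Ring A] [Algebra K A] {a : A} (h : a * a + a * a = 2) : a * a = 1 := by
  have hsmul : (2 : K) • (a * a) = (2 : K) • (1 : A) := by
    rw [two_smul, two_smul, h, one_add_one_eq_two]
  exact (IsUnit.mk0 (2 : K) two_ne_zero).smul_left_cancel.mp hsmul

section ListProd

variable {ι M : Type*} [DecidableEq ι] [Monoid M] {L : List ι} {k l : ι}

theorem perm_cons_cons_filter_notMem_pair (hL : L.Nodup) (hk : k ∈ L) (hl : l ∈ L) (hkl : k ≠ l) :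
    L.Perm (k :: l :: L.filter (· ∉ ({k, l} : Finset ι))) := by
  have hnodup : (k :: l :: L.filter (· ∉ ({k, l} : Finset ι))).Nodup := by
    simp [hkl, hL.filter]
  rw [List.perm_ext_iff_of_nodup hL hnodup]
  intro j
  by_cases hjk : j = k <;> by_cases hjl : j = l <;> simp_all

theorem prod_map_eq_mul_mul_prod_filter_notMem_pair (hL : L.Nodup) (hk : k ∈ L) (hl : l ∈ L)
    (hkl : k ≠ l) {f : ι → M} (hf : (L.map f).Pairwise Commute) :
    (L.map f).prod = f k * f l * ((L.filter (· ∉ ({k, l} : Finset ι))).map f).prod := by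
  rw [((perm_cons_cons_filter_notMem_pair hL hk hl hkl).map f).prod_eq' hf, List.map_cons,
    List.map_cons, List.prod_cons, List.prod_cons, mul_assoc]

end ListProd

section ModeFactor

variable {K A : Type*} [Field K] [Ring A] [Algebra K A]

/-- The factor `(1/2)(1 + t P)` that a single mode contributes to a standard-form Gaussian state;
there `P = c_{2j-1} c_{2j}` and `t = i λ_j`. -/
def modeFactor (t : K) (P : A) : A :=
  (2⁻¹ : K) • (1 + t • P)

theorem commute_modeFactor_left (t : K) {P Y : A} (h : Commute P Y) : Commute (modeFactor t P) Y :=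
  ((Commute.one_left Y).add_left (h.smul_left t)).smul_left _

theorem commute_modeFactor_modeFactor (s t : K) {P Q : A} (h : Commute P Q) :
    Commute (modeFactor s P) (modeFactor t Q) :=
  commute_modeFactor_left s (commute_modeFactor_left t h.symm).symm

theorem modeFactor_mul_modeFactor_commutator [NeZero (2 : K)] (s t : K) {P Q X : A}
    (hP : SemiconjBy P X (-X)) (hQ : SemiconjBy Q X (-X)) :
    modeFactor s P * modeFactor t Q * X - X * (modeFactor s P * modeFactor t Q) =
      (2⁻¹ : K) • (s • (P * X) + t • (Q * X)) := by
  have hXP : X * P = -(P * X) := by rw [(semiconjBy_neg_symm hP).eq, neg_mul]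
  have hXQ : X * Q = -(Q * X) := by rw [(semiconjBy_neg_symm hQ).eq, neg_mul]
  have hPQ : X * (P * Q) = P * Q * X := by
    rw [← mul_assoc, hXP, neg_mul, mul_assoc, hXQ, mul_neg, neg_neg, mul_assoc]
  simp only [modeFactor, smul_mul_assoc, mul_smul_comm, mul_add, add_mul, one_mul, mul_one,
    smul_add, smul_smul, hXP, hXQ, hPQ, smul_neg]
  match_scalars <;> field_simp <;> ring

theorem modeFactor_mul_modeFactor_commutator_mul [NeZero (2 : K)] (s t : K) {a b c d : A}
    (hab : SemiconjBy a b (-b)) (had : SemiconjBy a d (-d)) (hcb : SemiconjBy c b (-b))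
    (hcd : SemiconjBy c d (-d)) (hbd : SemiconjBy b d (-d))
    (hb : b * b = 1) (hd : d * d = 1) :
    modeFactor s (a * b) * modeFactor t (c * d) * (b * d) -
        b * d * (modeFactor s (a * b) * modeFactor t (c * d)) =
      (2⁻¹ : K) • (s • (a * d) + t • (b * c)) := by
  have hdb : SemiconjBy d b (-b) := semiconjBy_neg_symm hbd
  have had_eq : a * b * (b * d) = a * d := by rw [mul_assoc, ← mul_assoc b, hb, one_mul]
  have hbc_eq : c * d * (b * d) = b * c := mul_mul_mul_cancel_of_semiconjBy_neg hcb hdb hd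
  rw [← had_eq, ← hbc_eq]
  exact modeFactor_mul_modeFactor_commutator s t
    (semiconjBy_mul_neg_of_shared_left hab had hbd)
    (semiconjBy_mul_neg_of_shared_right hcd hcb hdb)

end ModeFactor

theorem gaussianStd_commutator_offDiagonal_general {K A ι : Type*} [Field K] [NeZero (2 : K)]
    [Ring A] [Algebra K A] [DecidableEq ι] {o e : ι → A}
    (hoo : ∀ i j, i ≠ j → o i * o j + o j * o i = 0)
    (hee : ∀ i j, e i * e j + e j * e i = if i = j then (2 : A) else 0)
    (hoe : ∀ i j, o i * e j + e j * o i = 0)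
    (t : ι → K) {L : List ι} (hL : L.Nodup) {k l : ι} (hk : k ∈ L) (hl : l ∈ L) (hkl : k ≠ l) :
    (L.map fun j => modeFactor (t j) (o j * e j)).prod * (e k * e l) -
        e k * e l * (L.map fun j => modeFactor (t j) (o j * e j)).prod =
      (2⁻¹ : K) • ((t k • (o k * e l) + t l • (e k * o l)) *
        ((L.filter (· ∉ ({k, l} : Finset ι))).map fun j => modeFactor (t j) (o j * e j)).prod) := by
  have oo {i j} (h : i ≠ j) := semiconjBy_neg_of_mul_add_mul_eq_zero (hoo i j h)
  have ee {i j} (h : i ≠ j) :=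
    semiconjBy_neg_of_mul_add_mul_eq_zero ((hee i j).trans (if_neg h))
  have oe i j := semiconjBy_neg_of_mul_add_mul_eq_zero (hoe i j)
  have e_sq j : e j * e j = 1 :=
    mul_self_eq_one_of_add_self_eq_two K ((hee j j).trans (if_pos rfl))
  set f : ι → A := fun j => modeFactor (t j) (o j * e j)
  set R : A := ((L.filter (· ∉ ({k, l} : Finset ι))).map f).prod
  have factors_commute : (L.map f).Pairwise Commute :=
    List.pairwise_map.mpr <| hL.imp fun hij => commute_modeFactor_modeFactor _ _ <|
      commute_mul_mul_of_semiconjBy_neg (oo hij) (oe _ _) (semiconjBy_neg_symm (oe _ _)) (ee hij)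
  have rest_commute : Commute R (e k * e l) := by
    refine Commute.list_prod_left _ _ (List.forall_mem_map.mpr fun j hj => ?_)
    obtain ⟨hjk, hjl⟩ : j ≠ k ∧ j ≠ l := by simpa using (List.mem_filter.mp hj).2
    exact commute_modeFactor_left _ <|
      commute_mul_mul_of_semiconjBy_neg (oe _ _) (oe _ _) (ee hjk) (ee hjl)
  have pair_commutator : f k * f l * (e k * e l) - e k * e l * (f k * f l) =
      (2⁻¹ : K) • (t k • (o k * e l) + t l • (e k * o l)) :=
    modeFactor_mul_modeFactor_commutator_mul _ _ (oe _ _) (oe _ _) (oe _ _) (oe _ _)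
      (ee hkl) (e_sq k) (e_sq l)
  rw [prod_map_eq_mul_mul_prod_filter_notMem_pair hL hk hl hkl factors_commute]
  calc f k * f l * R * (e k * e l) - e k * e l * (f k * f l * R)
      = (f k * f l * (e k * e l) - e k * e l * (f k * f l)) * R := by
        rw [mul_assoc (f k * f l), rest_commute.eq]; noncomm_ring
    _ = (2⁻¹ : K) • ((t k • (o k * e l) + t l • (e k * o l)) * R) := by
        rw [pair_commutator, smul_mul_assoc]

/-- For the standard-form Gaussian state and `k < l`,
`[ρ, c_{2k} c_{2l}] = (i/2)(λ_k c_{2k-1} c_{2l} + λ_l c_{2k} c_{2l-1}) ρ̂_{kl}`. -/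
theorem gaussianStd_commutator_offDiagonal {m : Type*} [Fintype m] [DecidableEq m]
    {N : ℕ} (o e : Fin N → Matrix m m ℂ)
    (ho : ∀ j, (o j).IsHermitian) (he : ∀ j, (e j).IsHermitian)
    (hoo : ∀ j k, o j * o k + o k * o j = if j = k then (2 : Matrix m m ℂ) else 0)
    (hee : ∀ j k, e j * e k + e k * e j = if j = k then (2 : Matrix m m ℂ) else 0)
    (hoe : ∀ j k, o j * e k + e k * o j = 0)
    (lam : Fin N → ℝ) (k l : Fin N) (hkl : k < l) :
    gaussianStd o e lam * (e k * e l) - (e k * e l) * gaussianStd o e lam =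
      (Complex.I / 2) •
        (((lam k : ℂ) • (o k * e l) + (lam l : ℂ) • (e k * o l)) *
          gaussianStdHat o e lam {k, l}) := by
  have h := gaussianStd_commutator_offDiagonal_general
    (fun i j hij => (hoo i j).trans (if_neg hij)) hee hoe (fun j => Complex.I * (lam j : ℂ))
    (List.nodup_finRange N) (List.mem_finRange k) (List.mem_finRange l) hkl.ne
  simp only [mul_smul, ← smul_add, smul_mul_assoc] at h
  rwa [smul_smul, inv_mul_eq_div] at h
end

section
/- Let c_1, …, c_{2N} be hermitian complex matrices satisfying the Clifford relations c_k c_l + c_l c_k = 2δ_{kl}·I, set P_j = c_{2j-1} c_{2j}, and let ρ = ∏_{j=1}^N (1/2)(I + i λ_j P_j) for real numbers λ_1, …, λ_N. Then for all 1 ≤ k < l ≤ N, the anticommutator of ρ with c_{2k} c_{2l} is {ρ, c_{2k} c_{2l}} = (1/2)(c_{2k} c_{2l} − λ_k λ_l c_{2k-1} c_{2l-1}) ρ̂_{kl}, where ρ̂_{kl} = ∏_{j≠k,l} (1/2)(I + i λ_j P_j). -/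
open scoped Matrix

/-!
The observable `X = c_{2k} c_{2l}` anticommutes with `P_k` and with `P_l`, and commutes with every
other `P_j`. Writing `ρ` as (factor `k`) (factor `l`) `ρ̂_{kl}`, the last factor commutes with `X`.
In the expansion of the first two, the terms linear in `P_k` or `P_l` cancel in the anticommutator
with `X`, while `1` and `P_k P_l` contribute twice, and `P_k P_l X = c_{2k-1} c_{2l-1}`.
-/

section Anticommute

/-- Two elements of a ring anticommute, written as the vanishing of `{a, b} = ab + ba` so that it is
literally the off-diagonal Clifford relation. -/
def Anticommute {A : Type*} [Ring A] (a b : A) : Prop :=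
  a * b + b * a = 0

namespace Anticommute

variable {A : Type*} [Ring A] {a b c : A}

theorem mul_eq_neg (h : Anticommute a b) : a * b = -(b * a) :=
  eq_neg_of_add_eq_zero_left h

theorem symm (h : Anticommute a b) : Anticommute b a :=
  (add_comm _ _).trans h

theorem commute_mul_right (hab : Anticommute a b) (hac : Anticommute a c) : Commute a (b * c) := by
  rw [Commute, SemiconjBy, ← mul_assoc, hab.mul_eq_neg, neg_mul, mul_assoc, hac.mul_eq_neg, mul_neg,
    neg_neg, mul_assoc]

theorem mul_right_of_commute_right (hab : Anticommute a b) (hac : Commute a c) :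
    Anticommute a (b * c) := by
  rw [Anticommute, ← mul_assoc, hab.mul_eq_neg, neg_mul, mul_assoc, hac.eq, ← mul_assoc,
    neg_add_cancel]

theorem mul_right_of_commute_left (hab : Commute a b) (hac : Anticommute a c) :
    Anticommute a (b * c) := by
  rw [Anticommute, ← mul_assoc, hab.eq, mul_assoc, hac.mul_eq_neg, mul_neg, mul_assoc,
    neg_add_cancel]

end Anticommute

variable {ι A : Type*} [Ring A] [DecidableEq ι] {c : ι → A}

theorem pairwise_anticommute_of_clifford
    (hc : ∀ i j, c i * c j + c j * c i = if i = j then 2 else 0) :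
    Pairwise fun i j => Anticommute (c i) (c j) :=
  fun i j hij => (hc i j).trans (if_neg hij)

theorem mul_self_eq_one_of_clifford [IsAddTorsionFree A]
    (hc : ∀ i j, c i * c j + c j * c i = if i = j then 2 else 0) (i : ι) : c i * c i = 1 := by
  have htwo : 2 • (c i * c i) = 2 • (1 : A) := by
    rw [two_nsmul, hc, if_pos rfl, two_nsmul, one_add_one_eq_two]
  exact nsmul_right_injective two_ne_zero htwo

end Anticommute

section ListProd

variable {ι M : Type*} [DecidableEq ι] {L : List ι} {k l : ι}

theorem list_perm_cons_cons_filter_notMem_pair (hL : L.Nodup) (hk : k ∈ L) (hl : l ∈ L)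
    (hkl : k ≠ l) : L.Perm (k :: l :: L.filter fun j => j ∉ ({k, l} : Finset ι)) := by
  rw [List.perm_ext_iff_of_nodup hL (by simp [hkl, hL.filter])]
  intro j
  simp only [List.mem_cons, List.mem_filter, Finset.mem_insert, Finset.mem_singleton,
    decide_eq_true_eq]
  grind

theorem list_prod_map_eq_mul_mul_filter_notMem_pair [Monoid M] {f : ι → M}
    (hf : Pairwise fun i j => Commute (f i) (f j)) (hL : L.Nodup) (hk : k ∈ L) (hl : l ∈ L)
    (hkl : k ≠ l) :
    (L.map f).prod =
      f k * f l * ((L.filter fun j => j ∉ ({k, l} : Finset ι)).map f).prod := by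
  have hcomm : (L.map f).Pairwise Commute := List.pairwise_map.2 (hL.imp fun hij => hf hij)
  rw [((list_perm_cons_cons_filter_notMem_pair hL hk hl hkl).map f).prod_eq' hcomm,
    List.map_cons, List.map_cons, List.prod_cons, List.prod_cons, mul_assoc]

end ListProd

section GaussianFactor

variable {R A : Type*} [CommRing R] [Ring A] [Algebra R A]

/-- One factor of a Gaussian state, with normalization `t` and weight `μ` on the bilinear `p`; the
standard form has `t = 1/2`, `μ = i λ_j` and `p = P_j`. -/
def gaussianFactor (t μ : R) (p : A) : A :=
  t • (1 + μ • p)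

theorem commute_gaussianFactor {x p : A} (h : Commute x p) (t μ : R) :
    Commute x (gaussianFactor t μ p) :=
  ((Commute.one_right x).add_right (h.smul_right μ)).smul_right t

theorem anticommutator_gaussianFactor_mul_gaussianFactor {x p q : A} (hp : Anticommute p x)
    (hq : Anticommute q x) (t μ ν : R) :
    gaussianFactor t μ p * gaussianFactor t ν q * x +
        x * (gaussianFactor t μ p * gaussianFactor t ν q) =
      (2 * t ^ 2) • (x + (μ * ν) • (p * q * x)) := by
  have hxp : x * p = -(p * x) := hp.symm.mul_eq_neg
  have hxq : x * q = -(q * x) := hq.symm.mul_eq_neg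
  have hxpq : x * (p * q) = p * q * x := (hp.symm.commute_mul_right hq.symm).eq
  simp only [gaussianFactor, smul_mul_assoc, mul_smul_comm, add_mul, mul_add, one_mul, mul_one,
    smul_add, smul_smul, hxp, hxq, hxpq, smul_neg]
  module

end GaussianFactor

section Modes

variable {ι A : Type*} [Ring A] {o e : ι → A} {i j k l : ι}

theorem commute_even_bilinear (hee : Pairwise fun i j => Anticommute (e i) (e j))
    (hoe : ∀ i j, Anticommute (o i) (e j)) (hij : i ≠ j) : Commute (e i) (o j * e j) :=
  (hoe j i).symm.commute_mul_right (hee hij)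

theorem commute_odd_bilinear (hoo : Pairwise fun i j => Anticommute (o i) (o j))
    (hoe : ∀ i j, Anticommute (o i) (e j)) (hij : i ≠ j) : Commute (o i) (o j * e j) :=
  (hoo hij).commute_mul_right (hoe i j)

theorem pairwise_commute_bilinear (hoo : Pairwise fun i j => Anticommute (o i) (o j))
    (hee : Pairwise fun i j => Anticommute (e i) (e j)) (hoe : ∀ i j, Anticommute (o i) (e j)) :
    Pairwise fun i j => Commute (o i * e i) (o j * e j) :=
  fun _ _ hij => (commute_odd_bilinear hoo hoe hij).mul_left (commute_even_bilinear hee hoe hij)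

theorem anticommute_bilinear_left (hee : Pairwise fun i j => Anticommute (e i) (e j))
    (hoe : ∀ i j, Anticommute (o i) (e j)) (hkl : k ≠ l) :
    Anticommute (o k * e k) (e k * e l) :=
  have ho : Commute (o k) (e k * e l) := (hoe k k).commute_mul_right (hoe k l)
  have he : Anticommute (e k) (e k * e l) := .mul_right_of_commute_left (.refl _) (hee hkl)
  (Anticommute.mul_right_of_commute_left ho.symm he.symm).symm

theorem anticommute_bilinear_right (hee : Pairwise fun i j => Anticommute (e i) (e j))
    (hoe : ∀ i j, Anticommute (o i) (e j)) (hkl : k ≠ l) :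
    Anticommute (o l * e l) (e k * e l) :=
  have ho : Commute (o l) (e k * e l) := (hoe l k).commute_mul_right (hoe l l)
  have he : Anticommute (e l) (e k * e l) := (hee hkl.symm).mul_right_of_commute_right (.refl _)
  (Anticommute.mul_right_of_commute_left ho.symm he.symm).symm

theorem bilinear_mul_bilinear_mul_even_mul_even (hee : Pairwise fun i j => Anticommute (e i) (e j))
    (hoe : ∀ i j, Anticommute (o i) (e j)) (hsq : ∀ j, e j * e j = 1) (hkl : k ≠ l) :
    o k * e k * (o l * e l) * (e k * e l) = o k * o l := by
  calc o k * e k * (o l * e l) * (e k * e l)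
      = o k * (e k * (o l * e l)) * (e k * e l) := by rw [mul_assoc (o k)]
    _ = o k * (o l * e l * e k) * (e k * e l) := by rw [(commute_even_bilinear hee hoe hkl).eq]
    _ = o k * o l * (e l * (e k * e k) * e l) := by simp only [mul_assoc]
    _ = o k * o l := by rw [hsq, mul_one, hsq, mul_one]

end Modes

theorem gaussianStd_anticommutator_offDiagonal_general {R A ι : Type*} [CommRing R] [Ring A]
    [Algebra R A] [DecidableEq ι] {o e : ι → A}
    (hoo : Pairwise fun i j => Anticommute (o i) (o j))
    (hee : Pairwise fun i j => Anticommute (e i) (e j))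
    (hoe : ∀ i j, Anticommute (o i) (e j)) (hsq : ∀ j, e j * e j = 1)
    (t : R) (μ : ι → R) {L : List ι} (hL : L.Nodup) {k l : ι} (hk : k ∈ L) (hl : l ∈ L)
    (hkl : k ≠ l) :
    (L.map fun j => gaussianFactor t (μ j) (o j * e j)).prod * (e k * e l) +
        e k * e l * (L.map fun j => gaussianFactor t (μ j) (o j * e j)).prod =
      (2 * t ^ 2) • ((e k * e l + (μ k * μ l) • (o k * o l)) *
        ((L.filter fun j => j ∉ ({k, l} : Finset ι)).map fun j =>
          gaussianFactor t (μ j) (o j * e j)).prod) := by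
  set F : ι → A := fun j => gaussianFactor t (μ j) (o j * e j) with hF
  set ρ' : A := ((L.filter fun j => j ∉ ({k, l} : Finset ι)).map F).prod
  have hFcomm : Pairwise fun i j => Commute (F i) (F j) := fun i j hij =>
    commute_gaussianFactor (commute_gaussianFactor
      (pairwise_commute_bilinear hoo hee hoe hij).symm _ _).symm _ _
  have hsplit : (L.map F).prod = F k * F l * ρ' :=
    list_prod_map_eq_mul_mul_filter_notMem_pair hFcomm hL hk hl hkl
  have hρ' : Commute (e k * e l) ρ' := by
    refine Commute.list_prod_right _ _ (List.forall_mem_map.2 fun j hj => ?_)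
    obtain ⟨hjk, hjl⟩ : j ≠ k ∧ j ≠ l := by simpa using List.of_mem_filter hj
    exact commute_gaussianFactor ((commute_even_bilinear hee hoe hjk.symm).mul_left
      (commute_even_bilinear hee hoe hjl.symm)) _ _
  have hpair : F k * F l * (e k * e l) + e k * e l * (F k * F l) =
      (2 * t ^ 2) • (e k * e l + (μ k * μ l) • (o k * o l)) := by
    rw [hF, anticommutator_gaussianFactor_mul_gaussianFactor (anticommute_bilinear_left hee hoe hkl)
      (anticommute_bilinear_right hee hoe hkl),
      bilinear_mul_bilinear_mul_even_mul_even hee hoe hsq hkl]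
  rw [hsplit, mul_assoc (F k * F l), ← hρ'.eq, ← mul_assoc, ← mul_assoc (e k * e l), ← add_mul,
    hpair, smul_mul_assoc]

/-- For the standard-form Gaussian state and `k < l`,
`{ρ, c_{2k} c_{2l}} = (1/2)(c_{2k} c_{2l} − λ_k λ_l c_{2k-1} c_{2l-1}) ρ̂_{kl}`. -/
theorem gaussianStd_anticommutator_offDiagonal {m : Type*} [Fintype m] [DecidableEq m]
    {N : ℕ} (o e : Fin N → Matrix m m ℂ)
    (ho : ∀ j, (o j).IsHermitian) (he : ∀ j, (e j).IsHermitian)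
    (hoo : ∀ j k, o j * o k + o k * o j = if j = k then (2 : Matrix m m ℂ) else 0)
    (hee : ∀ j k, e j * e k + e k * e j = if j = k then (2 : Matrix m m ℂ) else 0)
    (hoe : ∀ j k, o j * e k + e k * o j = 0)
    (lam : Fin N → ℝ) (k l : Fin N) (hkl : k < l) :
    gaussianStd o e lam * (e k * e l) + (e k * e l) * gaussianStd o e lam =
      (1 / 2 : ℂ) •
        ((e k * e l - ((lam k : ℂ) * (lam l : ℂ)) • (o k * o l)) *
          gaussianStdHat o e lam {k, l}) := by
  have : IsAddTorsionFree (Matrix m m ℂ) := .of_module_rat _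
  have hscalar : (1 / 2 : ℂ) = 2 * 2⁻¹ ^ 2 := by norm_num
  have hweight : Complex.I * lam k * (Complex.I * lam l) = -(lam k * lam l) := by
    rw [mul_mul_mul_comm, Complex.I_mul_I, neg_one_mul]
  rw [hscalar, sub_eq_add_neg, ← neg_smul, ← hweight]
  exact gaussianStd_anticommutator_offDiagonal_general (pairwise_anticommute_of_clifford hoo)
    (pairwise_anticommute_of_clifford hee) hoe (mul_self_eq_one_of_clifford hee) 2⁻¹
    (fun j => Complex.I * lam j) (List.nodup_finRange N) (List.mem_finRange k)
    (List.mem_finRange l) hkl.ne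
end
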